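/- Let n ≥ 1, let (X_1,Y_1),…,(X_n,Y_n) be points in ℝ^p × ℝ, and let G : ℝ × ℝ^p → [0,1] be any function. Define ν_n(t,x) = n^{-1/2} Σ_{i=1}^n (1{Y_i ≤ t} − G(t,X_i))·1{X_i ≤ x}, where ≤ on ℝ^p is the componentwise partial order. If for all i ≠ j the relation X_i ≤ X_j (componentwise) fails, then for every j = 1,…,n one has ν_n(Y_j,X_j) = n^{-1/2}(1 − G(Y_j,X_j)), and consequently max_{1 ≤ j ≤ n} |ν_n(Y_j,X_j)| ≤ n^{-1/2}. -/

import Mathlib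

open scoped Classical
open scoped BigOperators

/-- Collapse of Andrews' conditional Kolmogorov test statistic: if no covariate vector is
componentwise dominated by another one, the process `ν_n` evaluated at the sample points
reduces to `n^{-1/2}(1 - G(Y_j, X_j))`, so the CK statistic is at most `n^{-1/2}`. -/
theorem andrews_statistic_collapse
    (n p : ℕ) (hn : 1 ≤ n)
    (X : Fin n → (Fin p → ℝ)) (Y : Fin n → ℝ)
    (G : ℝ → (Fin p → ℝ) → ℝ)
    (hG : ∀ t x, G t x ∈ Set.Icc (0 : ℝ) 1)
    (hX : ∀ i j, i ≠ j → ¬ X i ≤ X j)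
    (ν : ℝ → (Fin p → ℝ) → ℝ)
    (hν : ∀ t x, ν t x = (Real.sqrt n)⁻¹ *
      ∑ i, ((if Y i ≤ t then (1 : ℝ) else 0) - G t (X i)) *
        (if X i ≤ x then (1 : ℝ) else 0)) :
    (∀ j, ν (Y j) (X j) = (Real.sqrt n)⁻¹ * (1 - G (Y j) (X j))) ∧
      ∀ j, |ν (Y j) (X j)| ≤ (Real.sqrt n)⁻¹ := by
  have key : ∀ j, ν (Y j) (X j) = (Real.sqrt n)⁻¹ * (1 - G (Y j) (X j)) := by
    intro j
    -- By `hX`, the indicator of `X i ≤ X j` kills every summand except `i = j`.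
    rw [hν, Finset.sum_eq_single j]
    · simp
    · intro i _ hij
      rw [if_neg (hX i j hij), mul_zero]
    · intro h
      exact absurd (Finset.mem_univ j) h
  refine ⟨key, fun j => ?_⟩
  obtain ⟨h0, h1⟩ := hG (Y j) (X j)
  have hs : 0 ≤ (Real.sqrt n)⁻¹ := by positivity
  rw [key, abs_of_nonneg (mul_nonneg hs (sub_nonneg.mpr h1))]
  exact mul_le_of_le_one_right hs (sub_le_self 1 h0)
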